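/- Sign preservation of the spatial derivative (Corollary 3.2, point 1): under the hypotheses of the explicit derivative formula (one-dimensional domain (a,b), K continuously differentiable, u0 continuously differentiable, u a solution with continuous ∂_x u and commuting mixed partials), for every t ∈ [0,T] and x ∈ (a,b) the sign of ∂_x u(t,x) equals the sign of u0'(x): ∂_x u(t,x) > 0 iff u0'(x) > 0, ∂_x u(t,x) < 0 iff u0'(x) < 0, and ∂_x u(t,x) = 0 iff u0'(x) = 0. In particular, if u0 is nonincreasing on (a,b) then u(t,·) is nonincreasing on (a,b) for every t ∈ [0,T]. -/

import Mathlib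

open MeasureTheory Set

/-!
For two points `x`, `y`, the increment `v t = u t y - u t x` of a solution satisfies
`|v' t - λ (v 0)| ≤ L |v t|`, because the nonlocal velocity at time `t` is a Lipschitz function of
the value `u t x`, uniformly in `t`. Comparison with an exponential and Grönwall's inequality then
bound `v t` below and above by positive multiples of `v 0`, with constants that do not depend on `x`
and `y`. Hence `u t` has the same order relations as `u 0`, and dividing by `y - x` and letting
`y → x` transfers the two bounds to the spatial derivatives; the equation itself is never
differentiated in space.
-/

open Filter Topology
open scoped NNReal

/-- For `0 < c`, the number `q` has the sign of `p` and a size comparable to that of `p`. The sign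
condition is expressed by a homogeneous non-strict inequality so that it survives passing to the
limit in difference quotients. -/
def SignComparable (c C p q : ℝ) : Prop :=
  c * p ^ 2 ≤ p * q ∧ |q| ≤ C * |p|

namespace SignComparable

theorem sign_eq {c C p q : ℝ} (hc : 0 < c) (hpq : SignComparable c C p q) :
    SignType.sign q = SignType.sign p := by
  obtain ⟨hlower, hupper⟩ := hpq
  rcases eq_or_ne p 0 with rfl | hp
  · have hq : q = 0 := by simpa only [abs_zero, mul_zero, abs_nonpos_iff] using hupper
    rw [hq]
  · have hprod : 0 < p * q := (by positivity : 0 < c * p ^ 2).trans_le hlower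
    rcases pos_and_pos_or_neg_and_neg_of_mul_pos hprod with ⟨hp, hq⟩ | ⟨hp, hq⟩
    · rw [sign_pos hp, sign_pos hq]
    · rw [sign_neg hp, sign_neg hq]

theorem div {c C p q : ℝ} (hpq : SignComparable c C p q) (d : ℝ) :
    SignComparable c C (p / d) (q / d) := by
  constructor
  · calc c * (p / d) ^ 2 = c * p ^ 2 / d ^ 2 := by ring
      _ ≤ p * q / d ^ 2 := div_le_div_of_nonneg_right hpq.1 (sq_nonneg d)
      _ = p / d * (q / d) := by ring
  · rw [abs_div, abs_div, ← mul_div_assoc]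
    gcongr
    exact hpq.2

theorem of_tendsto {ι : Type*} {l : Filter ι} [l.NeBot] {c C p q : ℝ} {f g : ι → ℝ}
    (hf : Tendsto f l (𝓝 p)) (hg : Tendsto g l (𝓝 q))
    (hfg : ∀ᶠ i in l, SignComparable c C (f i) (g i)) : SignComparable c C p q :=
  ⟨le_of_tendsto_of_tendsto ((hf.pow 2).const_mul c) (hf.mul hg) (hfg.mono fun _ hi => hi.1),
    le_of_tendsto_of_tendsto hg.abs (hf.abs.const_mul C) (hfg.mono fun _ hi => hi.2)⟩

theorem of_hasDerivAt {c C x p q : ℝ} {f g : ℝ → ℝ} (hf : HasDerivAt f p x)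
    (hg : HasDerivAt g q x)
    (hfg : ∀ᶠ y in 𝓝 x, SignComparable c C (f y - f x) (g y - g x)) :
    SignComparable c C p q := by
  refine of_tendsto hf.tendsto_slope hg.tendsto_slope ?_
  filter_upwards [hfg.filter_mono nhdsWithin_le_nhds] with y hy
  simpa only [slope_def_field] using hy.div (y - x)

end SignComparable

section LinearGrowth

variable {v v' : ℝ → ℝ} {T c L : ℝ}

theorem exp_mul_sq_le_mul_of_abs_deriv_sub_le {r : ℝ} (hc : 0 ≤ c) (hr : L < r)
    (hv : ∀ t ∈ Icc 0 T, HasDerivWithinAt v (v' t) (Icc 0 T) t)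
    (hv' : ∀ t ∈ Icc 0 T, |v' t - c * v 0| ≤ L * |v t|) {t : ℝ} (ht : t ∈ Icc 0 T) :
    Real.exp (-r * t) * v 0 ^ 2 ≤ v 0 * v t := by
  rcases eq_or_ne (v 0) 0 with h0 | h0
  · simp [h0]
  let B : ℝ → ℝ := fun s => Real.exp (-r * s) * v 0 ^ 2
  have hB (s : ℝ) : HasDerivAt B (-r * B s) s :=
    (((hasDerivAt_id s).const_mul (-r)).exp.mul_const (v 0 ^ 2)).congr_deriv (by
      simp only [id, B]; ring)
  have hcross (s : ℝ) (hs : s ∈ Icc 0 T) (hsB : v 0 * v s = B s) :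
      -r * B s < v 0 * v' s := by
    have hBpos : 0 < B s := by positivity
    have habs : |v 0| * |v s| = B s := by rw [← abs_mul, hsB, abs_of_pos hBpos]
    have hdiff : |v 0 * (v' s - c * v 0)| ≤ L * B s := by
      rw [abs_mul, ← habs, mul_left_comm]
      gcongr
      exact hv' s hs
    calc -r * B s < -(L * B s) := by rw [neg_mul]; gcongr
      _ ≤ v 0 * (v' s - c * v 0) := (abs_le.1 hdiff).1
      _ ≤ v 0 * (v' s - c * v 0) + c * v 0 ^ 2 := le_add_of_nonneg_right (by positivity)
      _ = v 0 * v' s := by ring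
  have hneg := image_le_of_deriv_right_lt_deriv_boundary'
    (f := fun s => -(v 0 * v s)) (f' := fun s => -(v 0 * v' s))
    (B := fun s => -B s) (B' := fun s => -(-r * B s))
    (fun s hs => ((hv s hs).continuousWithinAt.const_mul (v 0)).neg)
    (fun s hs => (((hv s (Ico_subset_Icc_self hs)).mono_of_mem_nhdsWithin
      (Icc_mem_nhdsGE_of_mem hs)).const_mul (v 0)).neg)
    (by simp [B, sq]) (fun s _ => (hB s).neg.continuousAt.continuousWithinAt)
    (fun s _ => (hB s).neg.hasDerivWithinAt)
    (fun s hs hsB => neg_lt_neg (hcross s (Ico_subset_Icc_self hs) (neg_injective hsB))) ht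
  exact neg_le_neg_iff.1 hneg

theorem gronwallBound_mul (a δ K ε x : ℝ) :
    gronwallBound (δ * a) K (ε * a) x = gronwallBound δ K ε x * a := by
  unfold gronwallBound
  split_ifs <;> ring

theorem abs_le_gronwallBound_mul_of_abs_deriv_sub_le (hc : 0 ≤ c)
    (hv : ∀ t ∈ Icc 0 T, HasDerivWithinAt v (v' t) (Icc 0 T) t)
    (hv' : ∀ t ∈ Icc 0 T, |v' t - c * v 0| ≤ L * |v t|) {t : ℝ} (ht : t ∈ Icc 0 T) :
    |v t| ≤ gronwallBound 1 L c t * |v 0| := by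
  have hgrowth (s : ℝ) (hs : s ∈ Ico 0 T) : ‖v' s‖ ≤ L * ‖v s‖ + c * |v 0| :=
    calc |v' s| = |(v' s - c * v 0) + c * v 0| := by rw [sub_add_cancel]
      _ ≤ |v' s - c * v 0| + |c * v 0| := abs_add_le _ _
      _ ≤ L * |v s| + c * |v 0| := by
        rw [abs_mul, abs_of_nonneg hc]
        gcongr
        exact hv' s (Ico_subset_Icc_self hs)
  have hbound := norm_le_gronwallBound_of_norm_deriv_right_le
    (fun s hs => (hv s hs).continuousWithinAt)
    (fun s hs => (hv s (Ico_subset_Icc_self hs)).mono_of_mem_nhdsWithin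
      (Icc_mem_nhdsGE_of_mem hs)) (one_mul |v 0|).ge hgrowth t ht
  rwa [gronwallBound_mul, sub_zero, Real.norm_eq_abs] at hbound

theorem signComparable_of_abs_deriv_sub_le {r : ℝ} (hc : 0 ≤ c) (hr : L < r)
    (hv : ∀ t ∈ Icc 0 T, HasDerivWithinAt v (v' t) (Icc 0 T) t)
    (hv' : ∀ t ∈ Icc 0 T, |v' t - c * v 0| ≤ L * |v t|) {t : ℝ} (ht : t ∈ Icc 0 T) :
    SignComparable (Real.exp (-r * t)) (gronwallBound 1 L c t) (v 0) (v t) :=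
  ⟨exp_mul_sq_le_mul_of_abs_deriv_sub_le hc hr hv hv' ht,
    abs_le_gronwallBound_mul_of_abs_deriv_sub_le hc hv hv' ht⟩

end LinearGrowth

section Interaction

variable {X : Type*} [MeasurableSpace X] {μ : Measure X} {s : Set X} {φ : ℝ → ℝ} {w : X → ℝ}

theorem integrableOn_comp_sub_const {M p : ℝ} (hφ : Continuous φ) (hs : MeasurableSet s)
    (hμs : μ s ≠ ⊤) (hw : AEStronglyMeasurable w (μ.restrict s)) (hwM : ∀ y ∈ s, |w y| ≤ M) :
    IntegrableOn (fun y => φ (w y - p)) s μ := by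
  obtain ⟨B, hB⟩ := (isCompact_Icc (a := -M - p) (b := M - p)).exists_bound_of_continuousOn
    hφ.continuousOn
  have : IsFiniteMeasure (μ.restrict s) := isFiniteMeasure_restrict.2 hμs
  refine Integrable.of_bound
    ((hφ.comp (continuous_id.sub continuous_const)).comp_aestronglyMeasurable hw) B
    (ae_restrict_of_forall_mem hs fun y hy => hB _ ?_)
  exact ⟨sub_le_sub_right (abs_le.1 (hwM y hy)).1 p, sub_le_sub_right (abs_le.1 (hwM y hy)).2 p⟩

theorem abs_setIntegral_comp_sub_const_sub_le {M p q : ℝ} {L : ℝ≥0} (hφ : Continuous φ)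
    (hφL : LipschitzOnWith L φ (Icc (-(M + M)) (M + M))) (hs : MeasurableSet s) (hμs : μ s ≠ ⊤)
    (hw : AEStronglyMeasurable w (μ.restrict s)) (hwM : ∀ y ∈ s, |w y| ≤ M)
    (hp : |p| ≤ M) (hq : |q| ≤ M) :
    |(∫ y in s, φ (w y - p) ∂μ) - ∫ y in s, φ (w y - q) ∂μ| ≤ L * μ.real s * |p - q| := by
  have hmem {r : ℝ} (hr : |r| ≤ M) (y : X) (hy : y ∈ s) :
      w y - r ∈ Icc (-(M + M)) (M + M) :=
    abs_le.1 ((abs_sub (w y) r).trans (add_le_add (hwM y hy) hr))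
  have hpointwise (y : X) (hy : y ∈ s) : ‖φ (w y - p) - φ (w y - q)‖ ≤ L * |p - q| := by
    simpa only [Real.norm_eq_abs, sub_sub_sub_cancel_left, abs_sub_comm q p] using
      hφL.norm_sub_le (hmem hp y hy) (hmem hq y hy)
  rw [← integral_sub (integrableOn_comp_sub_const hφ hs hμs hw hwM)
    (integrableOn_comp_sub_const hφ hs hμs hw hwM), mul_right_comm]
  exact norm_setIntegral_le_of_norm_le_const hμs.lt_top hpointwise

/-- The velocity at `x` of a state `w` under the interaction `φ` with the points of `s`, weighted by
`μ`, and relaxation at rate `lam` towards the state `u0`. -/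
noncomputable def interactionVelocity (φ : ℝ → ℝ) (μ : Measure X) (s : Set X) (lam : ℝ)
    (u0 w : X → ℝ) (x : X) : ℝ :=
  (∫ y in s, φ (w y - w x) ∂μ) + lam * (u0 x - w x)

/-- `u` is a bounded solution on `[0, T]`, over the domain `s`, of the evolution equation with
velocity `interactionVelocity φ μ s lam u0` and initial state `u0`. The problem `P((a, b), u0)` is
the case `φ ξ = K (ξ / h) * ξ`, with Lebesgue measure on `s = (a, b)`. -/
structure IsBoundedSolution (φ : ℝ → ℝ) (μ : Measure X) (s : Set X) (lam T : ℝ) (u0 : X → ℝ)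
    (u : ℝ → X → ℝ) : Prop where
  aestronglyMeasurable : ∀ t ∈ Icc 0 T, AEStronglyMeasurable (u t) (μ.restrict s)
  exists_abs_le : ∃ M, ∀ t ∈ Icc 0 T, ∀ x ∈ s, |u t x| ≤ M
  initial : ∀ x ∈ s, u 0 x = u0 x
  hasDerivWithinAt : ∀ t ∈ Icc 0 T, ∀ x ∈ s,
    HasDerivWithinAt (fun τ => u τ x) (interactionVelocity φ μ s lam u0 (u t) x) (Icc 0 T) t

namespace IsBoundedSolution

variable {lam T : ℝ} {u0 : X → ℝ} {u : ℝ → X → ℝ}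

theorem exists_abs_velocity_sub_le (hu : IsBoundedSolution φ μ s lam T u0 u)
    (hφ : LocallyLipschitz φ) (hs : MeasurableSet s) (hμs : μ s ≠ ⊤) (hlam : 0 ≤ lam) :
    ∃ L, ∀ t ∈ Icc 0 T, ∀ x ∈ s, ∀ y ∈ s,
      |interactionVelocity φ μ s lam u0 (u t) y - interactionVelocity φ μ s lam u0 (u t) x
        - lam * (u0 y - u0 x)| ≤ L * |u t y - u t x| := by
  obtain ⟨M, hM⟩ := hu.exists_abs_le
  obtain ⟨L, hL⟩ := hφ.locallyLipschitzOn.exists_lipschitzOnWith_of_compact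
    (isCompact_Icc (a := -(M + M)) (b := M + M))
  refine ⟨L * μ.real s + lam, fun t ht x hx y hy => ?_⟩
  have hintegral := abs_setIntegral_comp_sub_const_sub_le hφ.continuous hL hs hμs
    (hu.aestronglyMeasurable t ht) (hM t ht) (hM t ht y hy) (hM t ht x hx)
  calc _ = |((∫ z in s, φ (u t z - u t y) ∂μ) - ∫ z in s, φ (u t z - u t x) ∂μ)
          - lam * (u t y - u t x)| := by
        unfold interactionVelocity
        congr 1
        ring
    _ ≤ _ := abs_sub _ _
    _ ≤ L * μ.real s * |u t y - u t x| + lam * |u t y - u t x| := by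
        rw [abs_mul lam, abs_of_nonneg hlam]
        gcongr
    _ = (L * μ.real s + lam) * |u t y - u t x| := by ring

theorem exists_signComparable_sub (hu : IsBoundedSolution φ μ s lam T u0 u)
    (hφ : LocallyLipschitz φ) (hs : MeasurableSet s) (hμs : μ s ≠ ⊤) (hlam : 0 ≤ lam) {t : ℝ}
    (ht : t ∈ Icc 0 T) :
    ∃ c > 0, ∃ C, ∀ x ∈ s, ∀ y ∈ s, SignComparable c C (u0 y - u0 x) (u t y - u t x) := by
  obtain ⟨L, hL⟩ := hu.exists_abs_velocity_sub_le hφ hs hμs hlam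
  refine ⟨Real.exp (-(L + 1) * t), Real.exp_pos _, gronwallBound 1 L lam t, fun x hx y hy => ?_⟩
  rw [← hu.initial x hx, ← hu.initial y hy]
  refine signComparable_of_abs_deriv_sub_le (v := fun τ => u τ y - u τ x) hlam (lt_add_one L)
    (fun τ hτ => (hu.hasDerivWithinAt τ hτ y hy).sub (hu.hasDerivWithinAt τ hτ x hx))
    (fun τ hτ => ?_) ht
  simpa only [hu.initial x hx, hu.initial y hy] using hL τ hτ x hx y hy

theorem le_iff_le (hu : IsBoundedSolution φ μ s lam T u0 u) (hφ : LocallyLipschitz φ)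
    (hs : MeasurableSet s) (hμs : μ s ≠ ⊤) (hlam : 0 ≤ lam) {t : ℝ} (ht : t ∈ Icc 0 T) {x y : X}
    (hx : x ∈ s) (hy : y ∈ s) : u t y ≤ u t x ↔ u0 y ≤ u0 x := by
  obtain ⟨c, hc, C, hcomp⟩ := hu.exists_signComparable_sub hφ hs hμs hlam ht
  rw [← sub_nonpos, ← sign_nonpos_iff, (hcomp x hx y hy).sign_eq hc, sign_nonpos_iff, sub_nonpos]

end IsBoundedSolution

end Interaction

theorem IsBoundedSolution.sign_deriv_eq {φ : ℝ → ℝ} {μ : Measure ℝ} {s : Set ℝ} {lam T : ℝ}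
    {u0 : ℝ → ℝ} {u : ℝ → ℝ → ℝ} (hu : IsBoundedSolution φ μ s lam T u0 u)
    (hφ : LocallyLipschitz φ) (hs : IsOpen s) (hμs : μ s ≠ ⊤) (hlam : 0 ≤ lam) {t x p q : ℝ}
    (ht : t ∈ Icc 0 T) (hx : x ∈ s) (hp : HasDerivAt u0 p x) (hq : HasDerivAt (u t) q x) :
    SignType.sign q = SignType.sign p := by
  obtain ⟨c, hc, C, hcomp⟩ := hu.exists_signComparable_sub hφ hs.measurableSet hμs hlam ht
  refine (SignComparable.of_hasDerivAt (c := c) (C := C) hp hq ?_).sign_eq hc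
  filter_upwards [hs.mem_nhds hx] with y hy using hcomp x hx y hy

theorem locallyLipschitz_comp_div_mul_self {K : ℝ → ℝ} (hK : LocallyLipschitz K) (h : ℝ) :
    LocallyLipschitz fun ξ => K (ξ / h) * ξ := by
  have hmul : LocallyLipschitz fun p : ℝ × ℝ => p.1 * p.2 :=
    (contDiff_fst.mul contDiff_snd : ContDiff ℝ 1 _).locallyLipschitz
  have hdiv : LocallyLipschitz fun ξ : ℝ => ξ / h :=
    (contDiff_id.div_const h : ContDiff ℝ 1 _).locallyLipschitz
  exact hmul.comp ((hK.comp hdiv).prodMk .id)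

theorem stmt_7_general {φ : ℝ → ℝ} (hφ : LocallyLipschitz φ) {μ : Measure ℝ} {s : Set ℝ}
    (hs : IsOpen s) (hμs : μ s ≠ ⊤) {lam T : ℝ} (hlam : 0 ≤ lam) {u0 u0' : ℝ → ℝ}
    {u ux : ℝ → ℝ → ℝ} (hu : IsBoundedSolution φ μ s lam T u0 u)
    (hu0 : ∀ x ∈ s, HasDerivAt u0 (u0' x) x)
    (hux : ∀ t ∈ Icc 0 T, ∀ x ∈ s, HasDerivAt (u t) (ux t x) x) :
    (∀ t ∈ Icc 0 T, ∀ x ∈ s,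
      (0 < ux t x ↔ 0 < u0' x) ∧ (ux t x < 0 ↔ u0' x < 0) ∧ (ux t x = 0 ↔ u0' x = 0)) ∧
    (AntitoneOn u0 s → ∀ t ∈ Icc 0 T, AntitoneOn (u t) s) := by
  refine ⟨fun t ht x hx => ?_, fun hanti t ht x hx y hy hxy => ?_⟩
  · have hsign := hu.sign_deriv_eq hφ hs hμs hlam ht hx (hu0 x hx) (hux t ht x hx)
    exact ⟨by rw [← sign_eq_one_iff, hsign, sign_eq_one_iff],
      by rw [← sign_eq_neg_one_iff, hsign, sign_eq_neg_one_iff],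
      by rw [← sign_eq_zero_iff, hsign, sign_eq_zero_iff]⟩
  · exact (hu.le_iff_le hφ hs.measurableSet hμs hlam ht hx hy).2 (hanti hx hy hxy)

/-- Sign preservation of the spatial derivative (Corollary 3.2, point 1): under the
hypotheses of the explicit derivative formula, for every `t ∈ [0,T]` and `x ∈ (a,b)`
the sign of `∂_x u(t,x)` equals the sign of `u0'(x)`; in particular if `u0` is
nonincreasing on `(a,b)` then so is `u(t,·)` for every `t ∈ [0,T]`. -/
theorem stmt_7
    (a b : ℝ) (hab : a < b)
    (K K' : ℝ → ℝ) (hKnonneg : ∀ ξ, 0 ≤ K ξ) (BK : ℝ) (hKbdd : ∀ ξ, K ξ ≤ BK)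
    (LK : NNReal) (hKlip : LipschitzWith LK K)
    (hKderiv : ∀ ξ, HasDerivAt K (K' ξ) ξ) (hK'cont : Continuous K')
    (BK' : ℝ) (hK'bdd : ∀ ξ, |K' ξ| ≤ BK')
    (h : ℝ) (hh : 0 < h) (lam : ℝ) (hlam : 0 ≤ lam) (T : ℝ) (hT : 0 < T)
    (u0 u0' : ℝ → ℝ) (hu0deriv : ∀ x, HasDerivAt u0 (u0' x) x) (hu0'cont : Continuous u0')
    (u ux ut utx : ℝ → ℝ → ℝ)
    (humeas : ∀ t ∈ Icc (0:ℝ) T, Measurable (u t))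
    (M : ℝ) (hubdd : ∀ t ∈ Icc (0:ℝ) T, ∀ x ∈ Ioo a b, |u t x| ≤ M)
    (hinit : ∀ x ∈ Ioo a b, u 0 x = u0 x)
    (hsol : ∀ t ∈ Icc (0:ℝ) T, ∀ x ∈ Ioo a b,
      HasDerivWithinAt (fun τ => u τ x) (ut t x) (Icc 0 T) t)
    (hut : ∀ t ∈ Icc (0:ℝ) T, ∀ x ∈ Ioo a b,
      ut t x = (∫ y in Ioo a b, K ((u t y - u t x) / h) * (u t y - u t x))
        + lam * (u0 x - u t x))
    (hux : ∀ t ∈ Icc (0:ℝ) T, ∀ x ∈ Ioo a b, HasDerivAt (fun z => u t z) (ux t x) x)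
    (hucont : ContinuousOn (fun p : ℝ × ℝ => u p.1 p.2) (Icc 0 T ×ˢ Ioo a b))
    (huxcont : ContinuousOn (fun p : ℝ × ℝ => ux p.1 p.2) (Icc 0 T ×ˢ Ioo a b))
    (hmix1 : ∀ t ∈ Icc (0:ℝ) T, ∀ x ∈ Ioo a b,
      HasDerivWithinAt (fun τ => ux τ x) (utx t x) (Icc 0 T) t)
    (hmix2 : ∀ t ∈ Icc (0:ℝ) T, ∀ x ∈ Ioo a b,
      HasDerivAt (fun z => ut t z) (utx t x) x) :
    (∀ t ∈ Icc (0:ℝ) T, ∀ x ∈ Ioo a b,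
      (0 < ux t x ↔ 0 < u0' x) ∧ (ux t x < 0 ↔ u0' x < 0) ∧ (ux t x = 0 ↔ u0' x = 0)) ∧
    ((∀ x ∈ Ioo a b, ∀ y ∈ Ioo a b, x ≤ y → u0 y ≤ u0 x) →
      ∀ t ∈ Icc (0:ℝ) T, ∀ x ∈ Ioo a b, ∀ y ∈ Ioo a b, x ≤ y → u t y ≤ u t x) :=
  stmt_7_general (locallyLipschitz_comp_div_mul_self hKlip.locallyLipschitz h) isOpen_Ioo
    measure_Ioo_lt_top.ne hlam
    ⟨fun t ht => (humeas t ht).aestronglyMeasurable, ⟨M, hubdd⟩, hinit,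
      fun t ht x hx => (hsol t ht x hx).congr_deriv (hut t ht x hx)⟩
    (fun x _ => hu0deriv x) hux
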